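/- arXiv:cs/0210027 — 3 statements merged into one kernel-verified Lean document; each statement's English description precedes it below -/
import Mathlib

section
/- A propositional normal logic program P has a total well-founded model if and only if there exist a total model I of P and a total level mapping l for P such that P satisfies (WF) with respect to I and l. -/
namespace LP

/-- A literal over a set of propositional atoms: an atom or a negated atom. -/
inductive Lit (atom : Type) where
  | pos : atom → Lit atom
  | neg : atom → Lit atom

/-- The underlying atom of a literal. -/
def Lit.atomOf {atom : Type} : Lit atom → atom
  | .pos a => a
  | .neg a => a

/-- A clause `head ← pos₁,…,posₙ, ¬neg₁,…,¬negₘ`. -/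
structure Clause (atom : Type) where
  head : atom
  pos : Finset atom
  neg : Finset atom

variable {atom : Type}

/-- A (propositional) normal logic program: a set of clauses. -/
abbrev Program (atom : Type) := Set (Clause atom)

/-- Partial interpretations: sets of literals. -/
abbrev Interp (atom : Type) := Set (Lit atom)

def Consistent (I : Interp atom) : Prop := ∀ a : atom, ¬ (Lit.pos a ∈ I ∧ Lit.neg a ∈ I)

def Total (I : Interp atom) : Prop := ∀ a : atom, Lit.pos a ∈ I ∨ Lit.neg a ∈ I

/-- An atom is defined (true or false, i.e. not undefined) in `I`. -/
def Defined (I : Interp atom) (A : atom) : Prop := Lit.pos A ∈ I ∨ Lit.neg A ∈ I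

/-- Every body literal of the clause is true in `I`. -/
def BodyTrue (I : Interp atom) (C : Clause atom) : Prop :=
  (∀ a ∈ C.pos, Lit.pos a ∈ I) ∧ (∀ b ∈ C.neg, Lit.neg b ∈ I)

/-- Some body literal of the clause is false in `I`. -/
def BodyFalse (I : Interp atom) (C : Clause atom) : Prop :=
  (∃ a ∈ C.pos, Lit.neg a ∈ I) ∨ (∃ b ∈ C.neg, Lit.pos b ∈ I)

/-- Three-valued model. -/
def Model3 (P : Program atom) (I : Interp atom) : Prop :=
  Consistent I ∧ ∀ C ∈ P,
    (BodyTrue I C → Lit.pos C.head ∈ I) ∧ (¬ BodyFalse I C → Lit.neg C.head ∉ I)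

/-- Two-valued model. -/
def Model2 (P : Program atom) (M : Set atom) : Prop :=
  ∀ C ∈ P, (∀ a ∈ C.pos, a ∈ M) → (∀ b ∈ C.neg, b ∉ M) → C.head ∈ M

/-- A program is definite if no clause has negative body literals. -/
def Definite (P : Program atom) : Prop := ∀ C ∈ P, C.neg = ∅

/-- The one-step operator `T_P⁺` for definite programs. -/
def Tplus (P : Program atom) (M : Set atom) : Set atom :=
  {A | ∃ C ∈ P, C.head = A ∧ C.neg = ∅ ∧ ∀ a ∈ C.pos, a ∈ M}

def TplusIter (P : Program atom) : ℕ → Set atom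
  | 0 => ∅
  | n + 1 => Tplus P (TplusIter P n)

/-- `T_P⁺ ↑ ω`, the least two-valued model of a definite program. -/
def TplusOmega (P : Program atom) : Set atom := ⋃ n, TplusIter P n

/-- The Gelfond–Lifschitz reduct `P/M`. -/
def GLreduct (P : Program atom) (M : Set atom) : Program atom :=
  {C' | ∃ C ∈ P, (∀ b ∈ C.neg, b ∉ M) ∧ C' = ⟨C.head, C.pos, ∅⟩}

/-- The Gelfond–Lifschitz operator. -/
def GLop (P : Program atom) (M : Set atom) : Set atom := TplusOmega (GLreduct P M)

/-- Stable model. -/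
def Stable (P : Program atom) (M : Set atom) : Prop := GLop P M = M

def posLits (S : Set atom) : Interp atom := Lit.pos '' S
def negLits (S : Set atom) : Interp atom := Lit.neg '' S

/-- Three-valued immediate-consequence operator `T_P`. -/
def TP (P : Program atom) (I : Interp atom) : Set atom :=
  {A | ∃ C ∈ P, C.head = A ∧ BodyTrue I C}

/-- `F_P`: atoms all of whose clauses have false bodies. -/
def FP (P : Program atom) (I : Interp atom) : Set atom :=
  {A | ∀ C ∈ P, C.head = A → BodyFalse I C}

/-- Fitting's operator `Φ_P`. -/
def Phi (P : Program atom) (I : Interp atom) : Interp atom :=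
  posLits (TP P I) ∪ negLits (FP P I)

/-- Knaster–Tarski least (pre-)fixed point of an operator on sets. -/
def lfpSet {L : Type*} (F : Set L → Set L) : Set L := ⋂₀ {I | F I ⊆ I}

/-- Knaster–Tarski greatest (post-)fixed point of an operator on sets. -/
def gfpSet {L : Type*} (F : Set L → Set L) : Set L := ⋃₀ {I | I ⊆ F I}

/-- The Fitting (Kripke–Kleene) model: least fixed point of `Φ_P`. -/
def FittingModel (P : Program atom) : Interp atom := lfpSet (Phi P)

/-- Transfinite iteration `F ↑ α` of an operator starting from `∅`. -/
noncomputable def iterOrd {L : Type*} (F : Set L → Set L) (α : Ordinal.{0}) : Set L :=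
  Ordinal.limitRecOn α ∅ (fun _ ih => F ih) (fun o _ ih => ⋃ β, ⋃ h : β < o, ih β h)

/-- `U` is an unfounded set of `P` with respect to `I`. -/
def Unfounded (P : Program atom) (I : Interp atom) (U : Set atom) : Prop :=
  ∀ A ∈ U, ∀ C ∈ P, C.head = A → BodyFalse I C ∨ ∃ a ∈ C.pos, a ∈ U

/-- The greatest unfounded set of `P` with respect to `I`. -/
def UP (P : Program atom) (I : Interp atom) : Set atom := ⋃₀ {U | Unfounded P I U}

/-- The van Gelder–Ross–Schlipf operator `W_P`. -/
def WP (P : Program atom) (I : Interp atom) : Interp atom :=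
  posLits (TP P I) ∪ negLits (UP P I)

/-- The well-founded model: least fixed point of `W_P`. -/
def WFModel (P : Program atom) : Interp atom := lfpSet (WP P)

/-- `P` satisfies (F) with respect to `I` and the level mapping `l`. -/
def CondF (P : Program atom) (I : Interp atom) (l : atom → Ordinal.{0}) : Prop :=
  ∀ A : atom, Defined I A →
    (Lit.pos A ∈ I ∧ ∃ C ∈ P, C.head = A ∧
        (∀ a ∈ C.pos, Lit.pos a ∈ I ∧ l a < l A) ∧
        (∀ b ∈ C.neg, Lit.neg b ∈ I ∧ l b < l A)) ∨
    (Lit.neg A ∈ I ∧ ∀ C ∈ P, C.head = A →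
        (∃ a ∈ C.pos, Lit.neg a ∈ I ∧ l a < l A) ∨
        (∃ b ∈ C.neg, Lit.pos b ∈ I ∧ l b < l A))

/-- `P` satisfies (WF) with respect to `I` and the level mapping `l`. -/
def CondWF (P : Program atom) (I : Interp atom) (l : atom → Ordinal.{0}) : Prop :=
  ∀ A : atom, Defined I A →
    (Lit.pos A ∈ I ∧ ∃ C ∈ P, C.head = A ∧
        (∀ a ∈ C.pos, Lit.pos a ∈ I ∧ l a < l A) ∧
        (∀ b ∈ C.neg, Lit.neg b ∈ I ∧ l b < l A)) ∨
    (Lit.neg A ∈ I ∧ ∀ C ∈ P, C.head = A →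
        (∃ a ∈ C.pos, Lit.neg a ∈ I ∧ l a ≤ l A) ∨
        (∃ b ∈ C.neg, Lit.pos b ∈ I ∧ l b < l A))

/-- `P` satisfies (WS) with respect to `I` and the level mapping `l`. -/
def CondWS (P : Program atom) (I : Interp atom) (l : atom → Ordinal.{0}) : Prop :=
  ∀ A : atom, Defined I A →
    (Lit.pos A ∈ I ∧ ∃ C ∈ P, C.head = A ∧
        (∀ a ∈ C.pos, Lit.pos a ∈ I ∧ l a < l A) ∧
        (∀ b ∈ C.neg, Lit.neg b ∈ I ∧ l b < l A)) ∨
    (Lit.neg A ∈ I ∧ ∀ C ∈ P, C.head = A →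
        (∃ a ∈ C.pos, Lit.neg a ∈ I ∧ l a < l A) ∨
        ((∀ a ∈ C.pos, l a ≤ l A) ∧ (∀ b ∈ C.neg, l b < l A) ∧
            ∃ a ∈ C.pos, Lit.neg a ∈ I) ∨
        (∃ b ∈ C.neg, Lit.pos b ∈ I ∧ l b < l A))

/-- `A` refers to `B`. -/
def RefersTo (P : Program atom) (A B : atom) : Prop :=
  ∃ C ∈ P, C.head = A ∧ (B ∈ C.pos ∨ B ∈ C.neg)

/-- `A` refers negatively to `B`. -/
def RefersNeg (P : Program atom) (A B : atom) : Prop :=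
  ∃ C ∈ P, C.head = A ∧ B ∈ C.neg

/-- `DepOn P A B`: `A` depends on `B`, i.e. `B ≤ A`. -/
def DepOn (P : Program atom) : atom → atom → Prop := Relation.TransGen (RefersTo P)

/-- `DepNeg P B A`: `B < A`, i.e. `A` depends negatively on `B`. -/
def DepNeg (P : Program atom) (B A : atom) : Prop :=
  ∃ C D, RefersNeg P C D ∧ (DepOn P A C ∨ C = A) ∧ (DepOn P D B ∨ B = D)

/-- `A ~ B`. -/
def Sim (P : Program atom) (A B : atom) : Prop :=
  A = B ∨ (DepNeg P A B ∧ DepNeg P B A)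

/-- The components of `P`: equivalence classes of `~`. -/
def IsComponent (P : Program atom) (C : Set atom) : Prop :=
  ∃ A : atom, C = {B | Sim P A B}

/-- A trivial component: a singleton `{A}` with `A ≮ A`. -/
def TrivialComponent (P : Program atom) (C : Set atom) : Prop :=
  ∃ A : atom, C = {A} ∧ ¬ DepNeg P A A

/-- The ordering `≺` on components. -/
def CompLt (P : Program atom) (C₁ C₂ : Set atom) : Prop :=
  C₁ ≠ C₂ ∧ ∀ A₁ ∈ C₁, ∃ A₂ ∈ C₂, DepNeg P A₁ A₂

def MinimalComponent (P : Program atom) (C : Set atom) : Prop :=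
  IsComponent P C ∧ ¬ ∃ C₂, IsComponent P C₂ ∧ CompLt P C₂ C

/-- The bottom stratum `S(P)`: union of all minimal components. -/
def bottomStratum (P : Program atom) : Set atom :=
  {A | ∃ C, MinimalComponent P C ∧ A ∈ C}

/-- The bottom layer `L(P)`: clauses with head in the bottom stratum. -/
def bottomLayer (P : Program atom) : Program atom :=
  {C ∈ P | C.head ∈ bottomStratum P}

/-- Delete from the body of `C` all literals true in `I`. -/
noncomputable def reduceClause (I : Interp atom) (C : Clause atom) : Clause atom :=
  letI : ∀ p : Prop, Decidable p := fun p => Classical.propDecidable p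
  ⟨C.head, C.pos.filter (fun a => Lit.pos a ∉ I), C.neg.filter (fun b => Lit.neg b ∉ I)⟩

/-- Steps (1) and (2) of the reduct of `P` with respect to `I`. -/
noncomputable def step12 (P : Program atom) (I : Interp atom) : Program atom :=
  {C' | ∃ C ∈ P, Lit.pos C.head ∉ I ∧ ¬ BodyFalse I C ∧ C' = reduceClause I C}

def IsUnitClause (C : Clause atom) : Prop := C.pos = ∅ ∧ C.neg = ∅

/-- The reduct `P/I` of Przymusinska–Przymusinski (steps (1)–(3)). -/
noncomputable def reduct (P : Program atom) (I : Interp atom) : Program atom :=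
  {C ∈ step12 P I | IsUnitClause C ∨ ¬ ∃ C' ∈ step12 P I, C'.head = C.head ∧ IsUnitClause C'}

/-- The atoms occurring in `P`. -/
def atomsOf (P : Program atom) : Set atom :=
  {A | ∃ C ∈ P, A = C.head ∨ A ∈ C.pos ∨ A ∈ C.neg}

/-- `R`: atoms undefined in `N` which are eliminated from `P` by reducing w.r.t. `N`. -/
noncomputable def Ratoms (P : Program atom) (N : Interp atom) : Set atom :=
  {A | A ∈ atomsOf P ∧ A ∉ atomsOf (reduct P N) ∧ ¬ Defined N A}

/-- The definite (partial) model of a definite program `Q`. -/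
def defPartialModel (Q : Program atom) : Interp atom :=
  posLits (TplusOmega Q) ∪ negLits (atomsOf Q \ TplusOmega Q)

/-- The stopping condition of the weakly perfect model construction at `N`. -/
noncomputable def stopCond (P : Program atom) (N : Interp atom) : Prop :=
  reduct P N = ∅ ∨ bottomStratum (reduct P N) = ∅ ∨
    ∃ C ∈ bottomLayer (reduct P N), C.neg ≠ ∅

/-- `M_α` computed from `N_α` (empty if the construction has stopped). -/
noncomputable def Mstep (P : Program atom) (N : Interp atom) : Interp atom :=
  letI : ∀ p : Prop, Decidable p := fun p => Classical.propDecidable p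
  if stopCond P N then ∅
  else defPartialModel (bottomLayer (reduct P N)) ∪ negLits (Ratoms P N)

/-- `N_α = ⋃_{0<δ<α} M_δ` of the weakly perfect model construction. -/
noncomputable def Nseq (P : Program atom) : Ordinal.{0} → Interp atom :=
  Ordinal.lt_wf.fix (C := fun _ => Interp atom)
    (fun α ih => ⋃ β : Ordinal.{0}, ⋃ h : β < α, Mstep P (ih β h))

/-- The stage at which the weakly perfect model construction stops. -/
noncomputable def wpStop (P : Program atom) : Ordinal.{0} :=
  sInf {α | stopCond P (Nseq P α)}

/-- The weakly perfect model `M_P = N_α ∪ ¬R_α` at the stopping stage `α`. -/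
noncomputable def weaklyPerfectModel (P : Program atom) : Interp atom :=
  Nseq P (wpStop P) ∪ negLits (Ratoms P (Nseq P (wpStop P)))

/-- Clause subsumption `C₁ ≼ C₂`. -/
def ClauseSub (C₁ C₂ : Clause atom) : Prop :=
  C₁.head = C₂.head ∧ C₁.pos ⊆ C₂.pos ∧ C₁.neg ⊆ C₂.neg

/-- `P'` subsumes `Q` model-consistently with respect to `I`: `P' ≼_I Q`. -/
def SubsumesMC (P' Q : Program atom) (I : Interp atom) : Prop :=
  (∀ C₁ ∈ P', ∃ C₂ ∈ Q, ClauseSub C₁ C₂ ∧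
      (∀ a ∈ C₂.pos, a ∉ C₁.pos → Lit.pos a ∈ I) ∧
      (∀ b ∈ C₂.neg, b ∉ C₁.neg → Lit.neg b ∈ I)) ∧
  (∀ C₂ ∈ Q, BodyTrue I C₂ → Lit.pos C₂.head ∉ I → ∃ C₁ ∈ P', ClauseSub C₁ C₂)


/-- Union of all stages strictly below a given one, where stages iterate `W_P`. -/
noncomputable def stageBelow (P : Program atom) : Ordinal.{0} → Interp atom :=
  Ordinal.lt_wf.fix (C := fun _ => Interp atom)
    (fun α ih => ⋃ β : Ordinal.{0}, ⋃ h : β < α, WP P (ih β h))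

theorem stageBelow_eq (P : Program atom) (α : Ordinal.{0}) :
    stageBelow P α = ⋃ β : Ordinal.{0}, ⋃ _ : β < α, WP P (stageBelow P β) :=
  WellFounded.fix_eq _ _ _

theorem mem_stageBelow (P : Program atom) (α : Ordinal.{0}) (x : Lit atom) :
    x ∈ stageBelow P α ↔ ∃ β < α, x ∈ WP P (stageBelow P β) := by
  rw [stageBelow_eq]; simp

theorem BodyFalse.mono {I J : Interp atom} (h : I ⊆ J) {C : Clause atom}
    (hC : BodyFalse I C) : BodyFalse J C := by
  rcases hC with ⟨a, ha, h1⟩ | ⟨a, ha, h1⟩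
  · exact Or.inl ⟨a, ha, h h1⟩
  · exact Or.inr ⟨a, ha, h h1⟩

theorem BodyTrue.mono {I J : Interp atom} (h : I ⊆ J) {C : Clause atom}
    (hC : BodyTrue I C) : BodyTrue J C :=
  ⟨fun a ha => h (hC.1 a ha), fun a ha => h (hC.2 a ha)⟩

theorem UP_unfounded (P : Program atom) (I : Interp atom) : Unfounded P I (UP P I) := by
  rintro A ⟨U, hU, hA⟩ C hC hh
  rcases hU A hA C hC hh with h | ⟨a, ha, h⟩
  · exact Or.inl h
  · exact Or.inr ⟨a, ha, U, hU, h⟩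

theorem pos_mem_WP (P : Program atom) (I : Interp atom) (A : atom) :
    Lit.pos A ∈ WP P I ↔ A ∈ TP P I := by
  simp [WP, posLits, negLits]

theorem neg_mem_WP (P : Program atom) (I : Interp atom) (A : atom) :
    Lit.neg A ∈ WP P I ↔ A ∈ UP P I := by
  simp [WP, posLits, negLits]

theorem WP_mono (P : Program atom) {I J : Interp atom} (h : I ⊆ J) : WP P I ⊆ WP P J := by
  intro x hx
  cases x with
  | pos A =>
    rw [pos_mem_WP] at *
    obtain ⟨C, hC, hh, hb⟩ := hx
    exact ⟨C, hC, hh, hb.mono h⟩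
  | neg A =>
    rw [neg_mem_WP] at *
    obtain ⟨U, hU, hA⟩ := hx
    refine ⟨U, ?_, hA⟩
    intro B hB C hC hh
    exact (hU B hB C hC hh).imp (BodyFalse.mono h) id

theorem stageBelow_mono (P : Program atom) {α β : Ordinal.{0}} (h : α ≤ β) :
    stageBelow P α ⊆ stageBelow P β := by
  intro x hx
  rw [mem_stageBelow] at *
  obtain ⟨γ, hγ, hx⟩ := hx
  exact ⟨γ, hγ.trans_le h, hx⟩

theorem BodyTrue.not_false {I : Interp atom} (hI : Consistent I) {C : Clause atom}
    (h : BodyTrue I C) : ¬ BodyFalse I C := by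
  rintro (⟨a, ha, h1⟩ | ⟨a, ha, h1⟩)
  · exact hI a ⟨h.1 a ha, h1⟩
  · exact hI a ⟨h1, h.2 a ha⟩

theorem stage_consistent (P : Program atom) (γ : Ordinal.{0}) :
    Consistent (WP P (stageBelow P γ)) := by
  induction γ using WellFoundedLT.induction with
  | ind γ ih =>
    have hJ : Consistent (stageBelow P γ) := by
      rintro A ⟨h1, h2⟩
      rw [mem_stageBelow] at h1 h2
      obtain ⟨a, ha, h1⟩ := h1
      obtain ⟨b, hb, h2⟩ := h2
      exact ih (max a b) (max_lt ha hb) A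
        ⟨WP_mono P (stageBelow_mono P (le_max_left a b)) h1,
          WP_mono P (stageBelow_mono P (le_max_right a b)) h2⟩
    have key : ∀ δ : Ordinal.{0}, δ ≤ γ → ∀ A, Lit.pos A ∈ WP P (stageBelow P δ) →
        A ∉ UP P (stageBelow P γ) := by
      intro δ
      induction δ using WellFoundedLT.induction with
      | ind δ ih2 =>
        intro hδ A hA hU
        rw [pos_mem_WP] at hA
        obtain ⟨C, hC, hh, hb⟩ := hA
        rcases UP_unfounded P _ A hU C hC hh with h | ⟨a, ha, haU⟩
        · exact (hb.mono (stageBelow_mono P hδ)).not_false hJ h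
        · have := hb.1 a ha
          rw [mem_stageBelow] at this
          obtain ⟨ε, hε, h⟩ := this
          exact ih2 ε hε (hε.le.trans hδ) a h haU
    rintro A ⟨h1, h2⟩
    exact key γ le_rfl A h1 ((neg_mem_WP _ _ _).1 h2)

theorem mem_WFModel (P : Program atom) (x : Lit atom) :
    x ∈ WFModel P ↔ ∃ γ, x ∈ WP P (stageBelow P γ) := by
  constructor
  · intro hx
    let M : Interp atom := {x | ∃ γ, x ∈ WP P (stageBelow P γ)}
    have hM : WP P M ⊆ M := by
      have h : ∀ x : Lit atom, ∃ γ : Ordinal.{0}, x ∈ M → x ∈ WP P (stageBelow P γ) := by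
        intro x
        by_cases hx : x ∈ M
        · obtain ⟨γ, h⟩ := hx
          exact ⟨γ, fun _ => h⟩
        · exact ⟨0, fun h => absurd h hx⟩
      choose r hr using h
      intro y hy
      refine ⟨Order.succ (⨆ x, r x), WP_mono P ?_ hy⟩
      intro x hx
      rw [mem_stageBelow]
      exact ⟨r x, Order.lt_succ_of_le (Ordinal.le_iSup r x), hr x hx⟩
    exact hx M hM
  · rintro ⟨γ, hγ⟩ J hJ
    induction γ using WellFoundedLT.induction generalizing x with
    | ind γ ih =>
      refine hJ (WP_mono P ?_ hγ)
      intro y hy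
      rw [mem_stageBelow] at hy
      obtain ⟨β, hβ, hy⟩ := hy
      exact ih β hβ y hy

theorem stageBelow_subset_WFModel (P : Program atom) (γ : Ordinal.{0}) :
    stageBelow P γ ⊆ WFModel P := by
  intro x hx
  rw [mem_stageBelow] at hx
  obtain ⟨β, _, h⟩ := hx
  exact (mem_WFModel P x).2 ⟨β, h⟩

theorem WP_WFModel_subset (P : Program atom) : WP P (WFModel P) ⊆ WFModel P := by
  intro x hx J hJ
  exact hJ (WP_mono P (show WFModel P ⊆ J from fun y hy => hy J hJ) hx)

theorem WFModel_consistent (P : Program atom) : Consistent (WFModel P) := by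
  rintro A ⟨h1, h2⟩
  rw [mem_WFModel] at h1 h2
  obtain ⟨a, h1⟩ := h1
  obtain ⟨b, h2⟩ := h2
  exact stage_consistent P (max a b) A
    ⟨WP_mono P (stageBelow_mono P (le_max_left a b)) h1,
      WP_mono P (stageBelow_mono P (le_max_right a b)) h2⟩

theorem WFModel_model3 (P : Program atom) : Model3 P (WFModel P) := by
  refine ⟨WFModel_consistent P, fun C hC => ⟨fun hb => ?_, fun hb hn => hb ?_⟩⟩
  · exact WP_WFModel_subset P ((pos_mem_WP _ _ _).2 ⟨C, hC, rfl, hb⟩)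
  · obtain ⟨γ, h⟩ := (mem_WFModel P _).1 hn
    rw [neg_mem_WP] at h
    rcases UP_unfounded P _ _ h C hC rfl with h | ⟨a, ha, h⟩
    · exact h.mono (stageBelow_subset_WFModel P γ)
    · exact Or.inl ⟨a, ha, (mem_WFModel P _).2 ⟨γ, (neg_mem_WP _ _ _).2 h⟩⟩

/-- The first stage at which an atom gets decided. -/
noncomputable def wfLevel (P : Program atom) (A : atom) : Ordinal.{0} :=
  sInf {γ | Defined (WP P (stageBelow P γ)) A}

theorem wfLevel_le (P : Program atom) {A : atom} {γ : Ordinal.{0}}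
    (h : Defined (WP P (stageBelow P γ)) A) : wfLevel P A ≤ γ :=
  csInf_le' h

theorem wfLevel_lt (P : Program atom) {A : atom} {γ : Ordinal.{0}}
    (h : Defined (stageBelow P γ) A) : wfLevel P A < γ := by
  rcases h with h | h <;> rw [mem_stageBelow] at h <;> obtain ⟨β, hβ, h⟩ := h
  · exact (wfLevel_le P (Or.inl h)).trans_lt hβ
  · exact (wfLevel_le P (Or.inr h)).trans_lt hβ

theorem WFModel_condWF (P : Program atom) : CondWF P (WFModel P) (wfLevel P) := by
  intro A hA
  have hne : {γ | Defined (WP P (stageBelow P γ)) A}.Nonempty := by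
    rcases hA with h | h <;> obtain ⟨γ, h⟩ := (mem_WFModel P _).1 h
    · exact ⟨γ, Or.inl h⟩
    · exact ⟨γ, Or.inr h⟩
  have hsub := stageBelow_subset_WFModel P (wfLevel P A)
  have hmem : Defined (WP P (stageBelow P (wfLevel P A))) A := csInf_mem hne
  rcases hmem with h | h
  · left
    refine ⟨(mem_WFModel P _).2 ⟨_, h⟩, ?_⟩
    rw [pos_mem_WP] at h
    obtain ⟨C, hC, hh, hb⟩ := h
    exact ⟨C, hC, hh, fun a ha => ⟨hsub (hb.1 a ha), wfLevel_lt P (Or.inl (hb.1 a ha))⟩,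
      fun a ha => ⟨hsub (hb.2 a ha), wfLevel_lt P (Or.inr (hb.2 a ha))⟩⟩
  · right
    refine ⟨(mem_WFModel P _).2 ⟨_, h⟩, fun C hC hh => ?_⟩
    rw [neg_mem_WP] at h
    rcases UP_unfounded P _ _ h C hC hh with (⟨a, ha, h⟩ | ⟨a, ha, h⟩) | ⟨a, ha, h⟩
    · exact Or.inl ⟨a, ha, hsub h, (wfLevel_lt P (Or.inr h)).le⟩
    · exact Or.inr ⟨a, ha, hsub h, wfLevel_lt P (Or.inl h)⟩
    · rw [← neg_mem_WP] at h
      exact Or.inl ⟨a, ha, (mem_WFModel P _).2 ⟨_, h⟩, wfLevel_le P (Or.inr h)⟩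

theorem condWF_subset (P : Program atom) (I : Interp atom) (l : atom → Ordinal.{0})
    (hI : Consistent I) (hl : CondWF P I l) (J : Interp atom) (hJ : WP P J ⊆ J)
    (α : Ordinal.{0}) : ∀ A, l A = α →
      (Lit.pos A ∈ I → Lit.pos A ∈ J) ∧ (Lit.neg A ∈ I → Lit.neg A ∈ J) := by
  induction α using WellFoundedLT.induction with
  | ind α ih =>
    rintro A rfl
    constructor
    · intro hA
      rcases hl A (Or.inl hA) with ⟨_, C, hC, hh, h1, h2⟩ | ⟨h, _⟩
      · refine hJ ((pos_mem_WP _ _ _).2 ⟨C, hC, hh, fun a ha => ?_, fun a ha => ?_⟩)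
        · exact (ih _ (h1 a ha).2 a rfl).1 (h1 a ha).1
        · exact (ih _ (h2 a ha).2 a rfl).2 (h2 a ha).1
      · exact absurd ⟨hA, h⟩ (hI A)
    · intro hA
      refine hJ ((neg_mem_WP _ _ _).2 ⟨{B | Lit.neg B ∈ I ∧ l B ≤ l A}, ?_, hA, le_rfl⟩)
      rintro B ⟨hB, hBA⟩ C hC hh
      rcases hl B (Or.inr hB) with ⟨h, _⟩ | ⟨_, h⟩
      · exact absurd ⟨h, hB⟩ (hI B)
      · rcases h C hC hh with ⟨a, ha, h1, h2⟩ | ⟨b, hb, h1, h2⟩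
        · exact Or.inr ⟨a, ha, h1, h2.trans hBA⟩
        · exact Or.inl (Or.inr ⟨b, hb, (ih _ (h2.trans_le hBA) b rfl).1 h1⟩)

/-- `P` has a total well-founded model iff there is a total model `I` and
a total level mapping `l` such that `P` satisfies (WF) w.r.t. `I` and `l`. -/
theorem total_wellfounded_char {atom : Type} [Countable atom] (P : Program atom) :
    Total (WFModel P) ↔
    ∃ (I : Interp atom) (l : atom → Ordinal.{0}),
      Model3 P I ∧ Total I ∧ CondWF P I l := by
  constructor
  · intro h
    exact ⟨WFModel P, wfLevel P, WFModel_model3 P, h, WFModel_condWF P⟩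
  · rintro ⟨I, l, hM, hT, hl⟩ A
    rcases hT A with h | h
    · exact Or.inl fun J hJ => (condWF_subset P I l hM.1 hl J hJ _ A rfl).1 h
    · exact Or.inr fun J hJ => (condWF_subset P I l hM.1 hl J hJ _ A rfl).2 h

end LP
end

section
/- Let P be a propositional normal logic program, let L_P be the least fixed point and G_P the greatest fixed point of the monotone operator GL_P² on subsets of B_P. Then M = L_P ∪ ¬(B_P ∖ G_P) is the well-founded model of P. -/
namespace LP

variable {atom : Type}

theorem aux_closed (P : Program atom) (M : Set atom) (C : Clause atom) (hC : C ∈ P)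
    (hn : ∀ b ∈ C.neg, b ∉ M) (hp : ∀ a ∈ C.pos, a ∈ GLop P M) : C.head ∈ GLop P M := by
  have hstep : ∀ n, TplusIter (GLreduct P M) n ⊆ TplusIter (GLreduct P M) (n + 1) := by
    intro n
    induction n with
    | zero => intro x hx; exact hx.elim
    | succ k ih =>
      rintro x ⟨D, hD, h1, h2, h3⟩
      exact ⟨D, hD, h1, h2, fun a ha => ih (h3 a ha)⟩
  have hmono : Monotone (TplusIter (GLreduct P M)) := monotone_nat_of_le_succ hstep
  have hp' : ∀ a, ∃ n, a ∈ C.pos → a ∈ TplusIter (GLreduct P M) n := by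
    intro a
    by_cases ha : a ∈ C.pos
    · obtain ⟨n, hn⟩ := Set.mem_iUnion.1 (hp a ha)
      exact ⟨n, fun _ => hn⟩
    · exact ⟨0, fun h => absurd h ha⟩
  choose f hf using hp'
  refine Set.mem_iUnion.2 ⟨C.pos.sup f + 1, ?_⟩
  exact ⟨⟨C.head, C.pos, ∅⟩, ⟨C, hC, hn, rfl⟩, rfl, rfl,
    fun a ha => hmono (Finset.le_sup ha) (hf a ha)⟩

theorem aux_ind (P : Program atom) (M S : Set atom)
    (h : ∀ C ∈ P, (∀ b ∈ C.neg, b ∉ M) → (∀ a ∈ C.pos, a ∈ GLop P M) →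
      (∀ a ∈ C.pos, a ∈ S) → C.head ∈ S) : GLop P M ⊆ S := by
  have key : ∀ n, TplusIter (GLreduct P M) n ⊆ S := by
    intro n
    induction n with
    | zero => intro x hx; exact hx.elim
    | succ k ih =>
      rintro x ⟨D, ⟨C, hC, hn, rfl⟩, rfl, h2, h3⟩
      exact h C hC hn (fun a ha => Set.mem_iUnion.2 ⟨k, h3 a ha⟩) (fun a ha => ih (h3 a ha))
  exact Set.iUnion_subset key

theorem aux_anti (P : Program atom) {M N : Set atom} (h : M ⊆ N) : GLop P N ⊆ GLop P M :=
  aux_ind P N _ fun C hC hn _ hS => aux_closed P M C hC (fun b hb hM => hn b hb (h hM)) hS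

theorem aux_lfp {L : Type*} (F : Set L → Set L) (hF : Monotone F) : F (lfpSet F) = lfpSet F :=
  OrderHom.map_lfp ⟨F, hF⟩

theorem aux_gfp {L : Type*} (F : Set L → Set L) (hF : Monotone F) : F (gfpSet F) = gfpSet F :=
  OrderHom.map_gfp ⟨F, hF⟩

theorem aux_LG (P : Program atom) :
    GLop P (lfpSet (fun M => GLop P (GLop P M))) = gfpSet (fun M => GLop P (GLop P M)) ∧
    GLop P (gfpSet (fun M => GLop P (GLop P M))) = lfpSet (fun M => GLop P (GLop P M)) := by
  have hm : Monotone (fun M => GLop P (GLop P M)) := fun _ _ h => aux_anti P (aux_anti P h)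
  have hL := aux_lfp _ hm
  have hG := aux_gfp _ hm
  have hl : ∀ X, GLop P (GLop P X) ⊆ X → lfpSet (fun M => GLop P (GLop P M)) ⊆ X :=
    fun X hX => Set.sInter_subset_of_mem hX
  have hg : ∀ X, X ⊆ GLop P (GLop P X) → X ⊆ gfpSet (fun M => GLop P (GLop P M)) :=
    fun X hX => Set.subset_sUnion_of_mem hX
  generalize lfpSet (fun M => GLop P (GLop P M)) = L at *
  generalize gfpSet (fun M => GLop P (GLop P M)) = G at *
  have e : GLop P L = G := by
    apply Set.Subset.antisymm
    · exact hg _ (by rw [hL])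
    · have h1 : L ⊆ GLop P G := hl _ (by rw [hG])
      have h2 := aux_anti P h1
      rwa [hG] at h2
  exact ⟨e, by rw [← e, hL]⟩

/-- van Gelder: with `L_P` the least and `G_P` the greatest fixed point
of `GL_P²`, the interpretation `L_P ∪ ¬(B_P ∖ G_P)` is the well-founded model. -/
theorem alternating_fixpoint_char {atom : Type} [Countable atom] (P : Program atom) :
    posLits (lfpSet (fun M => GLop P (GLop P M))) ∪
      negLits (Set.univ \ gfpSet (fun M => GLop P (GLop P M))) = WFModel P := by
  obtain ⟨hLG, hGL⟩ := aux_LG P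
  have hl : ∀ X, GLop P (GLop P X) ⊆ X → lfpSet (fun M => GLop P (GLop P M)) ⊆ X :=
    fun X hX => Set.sInter_subset_of_mem hX
  generalize lfpSet (fun M => GLop P (GLop P M)) = L at *
  generalize gfpSet (fun M => GLop P (GLop P M)) = G at *
  have mpos : ∀ (S U : Set atom) a, Lit.pos a ∈ posLits S ∪ negLits U ↔ a ∈ S := by
    intro S U a; simp [posLits, negLits]
  have mneg : ∀ (S U : Set atom) a, Lit.neg a ∈ posLits S ∪ negLits U ↔ a ∈ U := by
    intro S U a; simp [posLits, negLits]
  apply Set.Subset.antisymm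
  · refine Set.subset_sInter ?_
    intro I (hI : WP P I ⊆ I)
    have hT : ∀ a ∈ TP P I, Lit.pos a ∈ I := fun a ha => hI ((mpos _ _ a).2 ha)
    have hF : ∀ a ∈ UP P I, Lit.neg a ∈ I := fun a ha => hI ((mneg _ _ a).2 ha)
    have hU : ∀ a, a ∉ GLop P {x | Lit.pos x ∈ I} → Lit.neg a ∈ I := by
      intro a ha
      refine hF a (Set.mem_sUnion.2 ⟨(GLop P {x | Lit.pos x ∈ I})ᶜ, ?_, ha⟩)
      rintro A hA C hC rfl
      by_contra hcon
      push Not at hcon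
      refine hA (aux_closed P _ C hC ?_ ?_)
      · intro b hb hbI
        exact hcon.1 (Or.inr ⟨b, hb, hbI⟩)
      · intro a ha
        exact not_not.1 (hcon.2 a ha)
    have hLT : L ⊆ {x | Lit.pos x ∈ I} := by
      apply hl
      apply aux_ind
      intro C hC hn _ hS
      exact hT _ ⟨C, hC, rfl, hS, fun b hb => hU b (hn b hb)⟩
    rintro _ (⟨a, ha, rfl⟩ | ⟨a, ha, rfl⟩)
    · exact hLT ha
    · refine hU a fun h => ha.2 ?_
      rw [← hLG]
      exact aux_anti P hLT h
  · refine Set.sInter_subset_of_mem ?_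
    rintro _ (⟨a, ⟨C, hC, rfl, hp, hn⟩, rfl⟩ | ⟨a, ⟨U, hU, haU⟩, rfl⟩)
    · rw [mpos, ← hGL]
      refine aux_closed P G C hC (fun b hb => ((mneg _ _ b).1 (hn b hb)).2) ?_
      intro a ha
      rw [hGL]
      exact (mpos _ _ a).1 (hp a ha)
    · rw [mneg]
      refine ⟨trivial, fun haG => ?_⟩
      have key : GLop P L ⊆ Uᶜ := by
        apply aux_ind
        intro C hC hn hp hS hCU
        rcases hU _ hCU C hC rfl with (⟨x, hx, hxI⟩ | ⟨b, hb, hbI⟩) | ⟨x, hx, hxU⟩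
        · exact ((mneg _ _ x).1 hxI).2 (hLG ▸ hp x hx)
        · exact hn b hb ((mpos _ _ b).1 hbI)
        · exact hS x hx hxU
      exact key (hLG ▸ haG) haU

end LP
end

section
/- Let P be a propositional normal logic program and, in the transfinite construction of its weakly perfect model, let N_α = ⋃_{0<δ<α} M_δ. Then for every ordinal α, the reduct P/N_α subsumes P model-consistently with respect to N_α, i.e. P/N_α ≼_{N_α} P. -/
namespace LP

variable {atom : Type}

theorem nseq_eq (P : Program atom) (α : Ordinal.{0}) :
    Nseq P α = ⋃ β : Ordinal.{0}, ⋃ _h : β < α, Mstep P (Nseq P β) := by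
  unfold Nseq
  rw [WellFounded.fix_eq]

theorem mem_nseq {P : Program atom} {α : Ordinal.{0}} {l : Lit atom} :
    l ∈ Nseq P α ↔ ∃ β, β < α ∧ l ∈ Mstep P (Nseq P β) := by
  rw [nseq_eq]; simp

theorem nseq_mono (P : Program atom) {β α : Ordinal.{0}} (h : β ≤ α) : Nseq P β ⊆ Nseq P α := by
  intro l hl
  obtain ⟨γ, hγ, hl⟩ := mem_nseq.1 hl
  exact mem_nseq.2 ⟨γ, lt_of_lt_of_le hγ h, hl⟩

theorem mem_mstep {P : Program atom} {N : Interp atom} {l : Lit atom} (h : l ∈ Mstep P N) :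
    ¬ stopCond P N ∧ (l ∈ defPartialModel (bottomLayer (reduct P N)) ∨ l ∈ negLits (Ratoms P N)) := by
  unfold Mstep at h
  split_ifs at h with hs
  · exact absurd h (by simp)
  · exact ⟨hs, h⟩

theorem mstep_of {P : Program atom} {N : Interp atom} {l : Lit atom} (hs : ¬ stopCond P N)
    (h : l ∈ defPartialModel (bottomLayer (reduct P N))) : l ∈ Mstep P N := by
  unfold Mstep
  rw [if_neg hs]
  exact Or.inl h

theorem pos_mem_dpm {Q : Program atom} {A : atom} :
    Lit.pos A ∈ defPartialModel Q ↔ A ∈ TplusOmega Q := by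
  simp [defPartialModel, posLits, negLits]

theorem neg_mem_dpm {Q : Program atom} {A : atom} :
    Lit.neg A ∈ defPartialModel Q ↔ A ∈ atomsOf Q ∧ A ∉ TplusOmega Q := by
  simp [defPartialModel, posLits, negLits]

theorem iter_mono_succ (Q : Program atom) (n : ℕ) : TplusIter Q n ⊆ TplusIter Q (n + 1) := by
  induction n with
  | zero => exact Set.empty_subset _
  | succ n ih =>
    rintro A ⟨C, hC, hh, hn, hp⟩
    exact ⟨C, hC, hh, hn, fun a ha => ih (hp a ha)⟩

theorem iter_mono (Q : Program atom) : Monotone (TplusIter Q) :=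
  monotone_nat_of_le_succ (iter_mono_succ Q)

theorem omega_closed {Q : Program atom} {C : Clause atom} (hC : C ∈ Q) (hn : C.neg = ∅)
    (hp : ∀ a ∈ C.pos, a ∈ TplusOmega Q) : C.head ∈ TplusOmega Q := by
  have h1 : ∀ a, ∃ n, a ∈ C.pos → a ∈ TplusIter Q n := by
    intro a
    by_cases ha : a ∈ C.pos
    · obtain ⟨n, hn⟩ := Set.mem_iUnion.1 (hp a ha)
      exact ⟨n, fun _ => hn⟩
    · exact ⟨0, fun h => absurd h ha⟩
  choose f hf using h1
  refine Set.mem_iUnion.2 ⟨C.pos.sup f + 1, C, hC, rfl, hn, fun a ha => ?_⟩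
  exact iter_mono Q (Finset.le_sup ha) (hf a ha)

theorem omega_atoms {Q : Program atom} {A : atom} (h : A ∈ TplusOmega Q) : A ∈ atomsOf Q := by
  obtain ⟨n, hn⟩ := Set.mem_iUnion.1 h
  cases n with
  | zero => exact absurd hn (by simp [TplusIter])
  | succ n =>
    obtain ⟨C, hC, hh, _⟩ := hn
    exact ⟨C, hC, Or.inl hh.symm⟩

/-- If a clause body is not false and its head is not true, the reduct has a clause for the head. -/
theorem reduct_has {P : Program atom} {N : Interp atom} {C : Clause atom} (hC : C ∈ P)
    (hh : Lit.pos C.head ∉ N) (hb : ¬ BodyFalse N C) :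
    reduceClause N C ∈ reduct P N ∨
      ∃ D ∈ reduct P N, D.head = C.head ∧ IsUnitClause D := by
  have h1 : reduceClause N C ∈ step12 P N := ⟨C, hC, hh, hb, rfl⟩
  by_cases h : ∃ C' ∈ step12 P N, C'.head = (reduceClause N C).head ∧ IsUnitClause C'
  · obtain ⟨D, hD, hDh, hu⟩ := h
    exact Or.inr ⟨D, ⟨hD, Or.inl hu⟩, hDh, hu⟩
  · exact Or.inl ⟨h1, Or.inr h⟩

theorem mem_reduce_pos {N : Interp atom} {C : Clause atom} {a : atom} :
    a ∈ (reduceClause N C).pos ↔ a ∈ C.pos ∧ Lit.pos a ∉ N := by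
  simp [reduceClause]

theorem mem_reduce_neg {N : Interp atom} {C : Clause atom} {a : atom} :
    a ∈ (reduceClause N C).neg ↔ a ∈ C.neg ∧ Lit.neg a ∉ N := by
  simp [reduceClause]

theorem atoms_reduct_pos {P : Program atom} {N : Interp atom} {A : atom}
    (h : A ∈ atomsOf (reduct P N)) : Lit.pos A ∉ N := by
  obtain ⟨D, ⟨⟨C, hC, hh, hb, rfl⟩, _⟩, hA⟩ := h
  rcases hA with rfl | hA | hA
  · exact hh
  · exact (mem_reduce_pos.1 hA).2
  · exact fun h => hb (Or.inr ⟨A, (mem_reduce_neg.1 hA).1, h⟩)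

/-- Reflexive closure of dependency. -/
theorem depNeg_iff (P : Program atom) (B A : atom) :
    DepNeg P B A ↔ ∃ C D, RefersNeg P C D ∧ Relation.ReflTransGen (RefersTo P) A C ∧
      Relation.ReflTransGen (RefersTo P) D B := by
  unfold DepNeg DepOn
  simp only [Relation.reflTransGen_iff_eq_or_transGen]
  constructor
  · rintro ⟨C, D, h, h1, h2⟩; exact ⟨C, D, h, h1.symm, h2.symm⟩
  · rintro ⟨C, D, h, h1, h2⟩; exact ⟨C, D, h, h1.symm, h2.symm⟩

theorem dep_of_depNeg {P : Program atom} {B A : atom} (h : DepNeg P B A) :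
    Relation.ReflTransGen (RefersTo P) A B := by
  obtain ⟨C, D, ⟨E, hE, hh, hn⟩, h1, h2⟩ := (depNeg_iff P B A).1 h
  exact (h1.tail ⟨E, hE, hh, Or.inr hn⟩).trans h2

theorem depNeg_left {P : Program atom} {B A A' : atom} (h : DepNeg P B A)
    (h' : Relation.ReflTransGen (RefersTo P) A' A) : DepNeg P B A' := by
  obtain ⟨C, D, h, h1, h2⟩ := (depNeg_iff P B A).1 h
  exact (depNeg_iff P B A').2 ⟨C, D, h, h'.trans h1, h2⟩

theorem depNeg_right {P : Program atom} {B B' A : atom} (h : DepNeg P B A)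
    (h' : Relation.ReflTransGen (RefersTo P) B B') : DepNeg P B' A := by
  obtain ⟨C, D, h, h1, h2⟩ := (depNeg_iff P B A).1 h
  exact (depNeg_iff P B' A).2 ⟨C, D, h, h1, h2.trans h'⟩

theorem sim_symm {P : Program atom} {A B : atom} (h : Sim P A B) : Sim P B A := by
  rcases h with rfl | ⟨h1, h2⟩
  · exact Or.inl rfl
  · exact Or.inr ⟨h2, h1⟩

theorem sim_dep {P : Program atom} {A B : atom} (h : Sim P A B) :
    Relation.ReflTransGen (RefersTo P) A B := by
  rcases h with rfl | ⟨h1, h2⟩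
  · exact .refl
  · exact dep_of_depNeg h2

theorem sim_trans {P : Program atom} {A B C : atom} (h : Sim P A B) (h' : Sim P B C) :
    Sim P A C := by
  rcases h with rfl | ⟨h1, h2⟩
  · exact h'
  · exact Or.inr ⟨depNeg_left h1 (sim_dep (sim_symm h')), depNeg_right h2 (sim_dep h')⟩

theorem sim_class {P : Program atom} {A B : atom} (h : Sim P A B) :
    {X | Sim P A X} = {X | Sim P B X} := by
  ext X
  exact ⟨fun hx => sim_trans (sim_symm h) hx, fun hx => sim_trans h hx⟩

/-- The bottom stratum is closed downward. -/
theorem bottom_closed {P : Program atom} {A B : atom} (hB : B ∈ bottomStratum P)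
    (hr : RefersTo P B A) : A ∈ bottomStratum P := by
  obtain ⟨C, ⟨⟨X, rfl⟩, hmin⟩, hBX⟩ := hB
  have hXB : Sim P X B := hBX
  rw [sim_class hXB] at hmin
  have hBA : Relation.ReflTransGen (RefersTo P) B A := .single hr
  refine ⟨{Y | Sim P A Y}, ⟨⟨A, rfl⟩, ?_⟩, Or.inl rfl⟩
  rintro ⟨K, hK, hne, hlt⟩
  have hltA : ∀ Y ∈ K, DepNeg P Y A := by
    intro Y hY
    obtain ⟨Z, hZ, hYZ⟩ := hlt Y hY
    exact depNeg_left hYZ (sim_dep hZ)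
  by_cases hKB : K = {Y | Sim P B Y}
  · have h1 : DepNeg P B A := hltA B (by rw [hKB]; exact Or.inl rfl)
    have h2 : Sim P A B := Or.inr
      ⟨depNeg_right (depNeg_left h1 hBA) hBA, h1⟩
    exact hne (by rw [hKB, sim_class h2])
  · exact hmin ⟨K, hK, hKB, fun Y hY => ⟨B, Or.inl rfl, depNeg_left (hltA Y hY) hBA⟩⟩

theorem atoms_layer_bottom {Q : Program atom} {A : atom} (h : A ∈ atomsOf (bottomLayer Q)) :
    A ∈ bottomStratum Q := by
  obtain ⟨C, ⟨hC, hb⟩, hA⟩ := h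
  rcases hA with rfl | hA
  · exact hb
  · exact bottom_closed hb ⟨C, hC, rfl, hA⟩

theorem atoms_layer_sub {Q : Program atom} {A : atom} (h : A ∈ atomsOf (bottomLayer Q)) :
    A ∈ atomsOf Q := by
  obtain ⟨C, ⟨hC, _⟩, hA⟩ := h
  exact ⟨C, hC, hA⟩

/-- Clauses for an atom made false at some stage have false bodies. -/
theorem mstep_neg_false {P : Program atom} {N : Interp atom} {A : atom}
    (h : Lit.neg A ∈ Mstep P N) {C : Clause atom} (hC : C ∈ P) (hh : C.head = A) :
    BodyFalse (N ∪ Mstep P N) C := by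
  by_cases hb : BodyFalse N C
  · rcases hb with ⟨a, ha, h⟩ | ⟨a, ha, h⟩
    · exact Or.inl ⟨a, ha, Or.inl h⟩
    · exact Or.inr ⟨a, ha, Or.inl h⟩
  subst hh
  obtain ⟨hs, h | h⟩ := mem_mstep h
  · obtain ⟨hat, hnT⟩ := neg_mem_dpm.1 h
    have hbot := atoms_layer_bottom hat
    have hpos := atoms_reduct_pos (atoms_layer_sub hat)
    have hneg : ∀ D ∈ bottomLayer (reduct P N), D.neg = ∅ := by
      intro D hD
      by_contra hne
      exact hs (Or.inr (Or.inr ⟨D, hD, hne⟩))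
    rcases reduct_has hC hpos hb with hR | ⟨D, hD, hDh, hu⟩
    · have hL : reduceClause N C ∈ bottomLayer (reduct P N) := ⟨hR, hbot⟩
      by_contra hcon
      apply hnT
      refine omega_closed (C := reduceClause N C) hL (hneg _ hL) (fun a ha => ?_)
      by_contra haT
      exact hcon (Or.inl ⟨a, (mem_reduce_pos.1 ha).1,
        Or.inr (mstep_of hs (neg_mem_dpm.2 ⟨⟨_, hL, Or.inr (Or.inl ha)⟩, haT⟩))⟩)
    · exfalso
      apply hnT
      rw [← hDh] at hbot ⊢
      exact omega_closed (Q := bottomLayer (reduct P N)) ⟨hD, hbot⟩ hu.2 (by simp [hu.1])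
  · exfalso
    obtain ⟨B, ⟨_, hB, hund⟩, hBA⟩ := h
    cases hBA
    apply hB
    rcases reduct_has hC (fun h => hund (Or.inl h)) hb with hR | ⟨D, hD, hDh, _⟩
    · exact ⟨_, hR, Or.inl rfl⟩
    · exact ⟨D, hD, Or.inl hDh.symm⟩

theorem nseq_neg_false {P : Program atom} {α : Ordinal.{0}} {A : atom}
    (h : Lit.neg A ∈ Nseq P α) {C : Clause atom} (hC : C ∈ P) (hh : C.head = A) :
    BodyFalse (Nseq P α) C := by
  obtain ⟨β, hβ, h⟩ := mem_nseq.1 h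
  have hsub : Nseq P β ∪ Mstep P (Nseq P β) ⊆ Nseq P α :=
    Set.union_subset (nseq_mono P hβ.le) (fun l hl => mem_nseq.2 ⟨β, hβ, hl⟩)
  rcases mstep_neg_false h hC hh with ⟨a, ha, h⟩ | ⟨a, ha, h⟩
  · exact Or.inl ⟨a, ha, hsub h⟩
  · exact Or.inr ⟨a, ha, hsub h⟩

theorem atoms_reduct_neg {P : Program atom} {α : Ordinal.{0}} {A : atom}
    (h : A ∈ atomsOf (reduct P (Nseq P α))) : Lit.neg A ∉ Nseq P α := by
  obtain ⟨D, ⟨⟨C, hC, hh, hb, rfl⟩, _⟩, hA⟩ := h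
  rcases hA with rfl | hA | hA
  · exact fun h => hb (nseq_neg_false h hC rfl)
  · exact fun h => hb (Or.inl ⟨A, (mem_reduce_pos.1 hA).1, h⟩)
  · exact (mem_reduce_neg.1 hA).2

theorem mstep_pos {P : Program atom} {N : Interp atom} {A : atom} (h : Lit.pos A ∈ Mstep P N) :
    A ∈ TplusOmega (bottomLayer (reduct P N)) := by
  obtain ⟨_, h | ⟨B, _, hB⟩⟩ := mem_mstep h
  · exact pos_mem_dpm.1 h
  · cases hB

theorem mstep_neg {P : Program atom} {N : Interp atom} {A : atom} (h : Lit.neg A ∈ Mstep P N) :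
    Lit.pos A ∉ N ∧ A ∉ TplusOmega (bottomLayer (reduct P N)) := by
  obtain ⟨_, h | ⟨B, ⟨_, hB, hund⟩, hBA⟩⟩ := mem_mstep h
  · obtain ⟨hat, hnT⟩ := neg_mem_dpm.1 h
    exact ⟨atoms_reduct_pos (atoms_layer_sub hat), hnT⟩
  · cases hBA
    exact ⟨fun h => hund (Or.inl h), fun h => hB (atoms_layer_sub (omega_atoms h))⟩

theorem nseq_consistent (P : Program atom) (α : Ordinal.{0}) : Consistent (Nseq P α) := by
  rintro A ⟨hp, hn⟩
  obtain ⟨β, _, hp⟩ := mem_nseq.1 hp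
  obtain ⟨γ, _, hn⟩ := mem_nseq.1 hn
  have hT := mstep_pos hp
  rcases lt_trichotomy β γ with h | h | h
  · exact (mstep_neg hn).1 (mem_nseq.2 ⟨β, h, hp⟩)
  · subst h
    exact (mstep_neg hn).2 hT
  · exact atoms_reduct_neg (atoms_layer_sub (omega_atoms hT)) (mem_nseq.2 ⟨γ, h, hn⟩)

/-- in the weakly perfect model construction, `P/N_α ≼_{N_α} P`. -/
theorem reduct_subsumes_model_consistently {atom : Type} [Countable atom]
    (P : Program atom) (α : Ordinal.{0}) :
    SubsumesMC (reduct P (Nseq P α)) P (Nseq P α) := by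
  constructor
  · rintro D ⟨⟨C, hC, hh, hb, rfl⟩, _⟩
    refine ⟨C, hC, ⟨rfl, fun a ha => (mem_reduce_pos.1 ha).1,
      fun a ha => (mem_reduce_neg.1 ha).1⟩, fun a ha hna => ?_, fun a ha hna => ?_⟩
    · by_contra h
      exact hna (mem_reduce_pos.2 ⟨ha, h⟩)
    · by_contra h
      exact hna (mem_reduce_neg.2 ⟨ha, h⟩)
  · intro C hC hb hh
    have hcon := nseq_consistent P α
    have hnf : ¬ BodyFalse (Nseq P α) C := by
      rintro (⟨a, ha, h⟩ | ⟨a, ha, h⟩)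
      · exact hcon a ⟨hb.1 a ha, h⟩
      · exact hcon a ⟨h, hb.2 a ha⟩
    rcases reduct_has hC hh hnf with h | ⟨D, hD, hDh, hu⟩
    · exact ⟨_, h, rfl, fun a ha => (mem_reduce_pos.1 ha).1, fun a ha => (mem_reduce_neg.1 ha).1⟩
    · exact ⟨D, hD, hDh, by simp [hu.1], by simp [hu.2]⟩

end LP
end
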